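/- (Consequence of the sup + inf inequality at the blow-up point.) Under the blow-up setup, there is a constant C' independent of i such that u_i(x_i) + 4 log δ_i ≤ C' for all i, where δ_i = d(x_i, ∂Ω). -/

import Mathlib

open MeasureTheory Filter Metric

abbrev E2 := EuclideanSpace ℝ (Fin 2)

noncomputable def pd (j : Fin 2) (u : E2 → ℝ) (x : E2) : ℝ :=
  fderiv ℝ u x (EuclideanSpace.single j 1)

noncomputable def lapl (u : E2 → ℝ) (x : E2) : ℝ :=
  pd 0 (pd 0 u) x + pd 1 (pd 1 u) x

/-- radial vector in log-polar coordinates -/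
noncomputable def ev (t p : ℝ) : E2 :=
  (Real.exp t * Real.cos p) • EuclideanSpace.single 0 1
    + (Real.exp t * Real.sin p) • EuclideanSpace.single 1 1

/-- angular vector in log-polar coordinates -/
noncomputable def eo (t p : ℝ) : E2 :=
  (-(Real.exp t * Real.sin p)) • EuclideanSpace.single 0 1
    + (Real.exp t * Real.cos p) • EuclideanSpace.single 1 1

lemma ev_dt (t p : ℝ) : HasDerivAt (fun t => ev t p) (ev t p) t := by
  unfold ev
  exact (((Real.hasDerivAt_exp t).mul_const _).smul_const _).add
    (((Real.hasDerivAt_exp t).mul_const _).smul_const _)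

lemma ev_dp (t p : ℝ) : HasDerivAt (fun p => ev t p) (eo t p) p := by
  unfold ev eo
  have h := (((Real.hasDerivAt_cos p).const_mul (Real.exp t)).smul_const
    (EuclideanSpace.single 0 1 : E2)).add
    (((Real.hasDerivAt_sin p).const_mul (Real.exp t)).smul_const (EuclideanSpace.single 1 1 : E2))
  rw [mul_neg] at h
  exact h

lemma eo_dp (t p : ℝ) : HasDerivAt (fun p => eo t p) (-ev t p) p := by
  unfold ev eo
  have h := (((Real.hasDerivAt_sin p).const_mul (Real.exp t)).neg.smul_const
    (EuclideanSpace.single 0 1 : E2)).add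
    (((Real.hasDerivAt_cos p).const_mul (Real.exp t)).smul_const (EuclideanSpace.single 1 1 : E2))
  rw [mul_neg] at h
  rw [neg_add, ← neg_smul, ← neg_smul]
  exact h

lemma ev_norm (t p : ℝ) : ‖ev t p‖ = Real.exp t := by
  rw [EuclideanSpace.norm_eq]
  simp only [ev, Fin.sum_univ_two]
  simp
  rw [← Real.sqrt_sq (Real.exp_pos t).le]
  congr 1
  rw [Real.sqrt_sq (Real.exp_pos t).le]
  rw [mul_pow, mul_pow, sq_abs, sq_abs]
  linear_combination (Real.exp t ^ 2) * Real.sin_sq_add_cos_sq p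

lemma ev_cont : Continuous (fun q : ℝ × ℝ => ev q.1 q.2) := by unfold ev; fun_prop
lemma eo_cont : Continuous (fun q : ℝ × ℝ => eo q.1 q.2) := by unfold eo; fun_prop

lemma ev_mem {x : E2} {d t : ℝ} (hd : 0 < d) (ht : t < Real.log d) (p : ℝ) :
    x + ev t p ∈ ball x d := by
  rw [mem_ball, dist_eq_norm, add_sub_cancel_left, ev_norm]
  exact (Real.lt_log_iff_exp_lt hd).1 ht

noncomputable def ph (u : E2 → ℝ) (x : E2) (t p : ℝ) : ℝ := u (x + ev t p) + 2 * t
noncomputable def pht (u : E2 → ℝ) (x : E2) (t p : ℝ) : ℝ := fderiv ℝ u (x + ev t p) (ev t p) + 2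
noncomputable def phtt (u : E2 → ℝ) (x : E2) (t p : ℝ) : ℝ :=
  fderiv ℝ (fderiv ℝ u) (x + ev t p) (ev t p) (ev t p) + fderiv ℝ u (x + ev t p) (ev t p)
noncomputable def php (u : E2 → ℝ) (x : E2) (t p : ℝ) : ℝ := fderiv ℝ u (x + ev t p) (eo t p)
noncomputable def phpp (u : E2 → ℝ) (x : E2) (t p : ℝ) : ℝ :=
  fderiv ℝ (fderiv ℝ u) (x + ev t p) (eo t p) (eo t p) + fderiv ℝ u (x + ev t p) (-ev t p)

section
variable {u : E2 → ℝ} {x : E2} {d : ℝ}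

lemma c2_facts (hu : ContDiffOn ℝ 2 u (ball x d)) {y : E2} (hy : y ∈ ball x d) :
    HasFDerivAt u (fderiv ℝ u y) y ∧ HasFDerivAt (fderiv ℝ u) (fderiv ℝ (fderiv ℝ u) y) y ∧
    ContinuousAt (fderiv ℝ (fderiv ℝ u)) y := by
  have h : ContDiffAt ℝ 2 u y := hu.contDiffAt (isOpen_ball.mem_nhds hy)
  have h1 : ContDiffAt ℝ 1 (fderiv ℝ u) y := h.fderiv_right (by norm_num)
  have h2 : ContDiffAt ℝ 0 (fderiv ℝ (fderiv ℝ u)) y := h1.fderiv_right (by norm_num)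
  exact ⟨(h.differentiableAt (by norm_num)).hasFDerivAt,
    (h1.differentiableAt (by norm_num)).hasFDerivAt, h2.continuousAt⟩

lemma ph_dt (hd : 0 < d) (hu : ContDiffOn ℝ 2 u (ball x d)) (t p : ℝ) (ht : t < Real.log d) :
    HasDerivAt (fun t => ph u x t p) (pht u x t p) t := by
  have h := (c2_facts hu (ev_mem hd ht p)).1
  have h1 := h.comp_hasDerivAt t ((ev_dt t p).const_add x)
  have h2 := h1.add ((hasDerivAt_id t).const_mul 2)
  rw [mul_one] at h2
  exact h2

lemma ph_dtt (hd : 0 < d) (hu : ContDiffOn ℝ 2 u (ball x d)) (t p : ℝ) (ht : t < Real.log d) :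
    HasDerivAt (fun t => pht u x t p) (phtt u x t p) t := by
  have h := (c2_facts hu (ev_mem hd ht p)).2.1
  have h1 := h.comp_hasDerivAt t ((ev_dt t p).const_add x)
  exact (h1.clm_apply (ev_dt t p)).add_const 2

lemma ph_dp (hd : 0 < d) (hu : ContDiffOn ℝ 2 u (ball x d)) (t p : ℝ) (ht : t < Real.log d) :
    HasDerivAt (fun p => ph u x t p) (php u x t p) p := by
  have h := (c2_facts hu (ev_mem hd ht p)).1
  have h1 := h.comp_hasDerivAt p ((ev_dp t p).const_add x)
  exact h1.add_const _

lemma ph_dpp (hd : 0 < d) (hu : ContDiffOn ℝ 2 u (ball x d)) (t p : ℝ) (ht : t < Real.log d) :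
    HasDerivAt (fun p => php u x t p) (phpp u x t p) p := by
  have h := (c2_facts hu (ev_mem hd ht p)).2.1
  have h1 := h.comp_hasDerivAt p ((ev_dp t p).const_add x)
  exact h1.clm_apply (eo_dp t p)

lemma xev_cont (q : ℝ × ℝ) : ContinuousAt (fun q : ℝ × ℝ => x + ev q.1 q.2) q :=
  (continuous_const.add ev_cont).continuousAt

lemma ph_c (hd : 0 < d) (hu : ContDiffOn ℝ 2 u (ball x d)) (t p : ℝ) (ht : t < Real.log d) :
    ContinuousAt (fun q : ℝ × ℝ => ph u x q.1 q.2) (t, p) := by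
  have h := (c2_facts hu (ev_mem hd ht p)).1.continuousAt
  have h1 := ContinuousAt.comp (x := ((t, p) : ℝ × ℝ)) (f := fun q : ℝ × ℝ => x + ev q.1 q.2) (g := u) h (xev_cont _)
  exact h1.add (by fun_prop)

lemma ph_ct (hd : 0 < d) (hu : ContDiffOn ℝ 2 u (ball x d)) (t p : ℝ) (ht : t < Real.log d) :
    ContinuousAt (fun q : ℝ × ℝ => pht u x q.1 q.2) (t, p) := by
  have h := (c2_facts hu (ev_mem hd ht p)).2.1.continuousAt
  have h1 := ContinuousAt.comp (x := ((t, p) : ℝ × ℝ)) (f := fun q : ℝ × ℝ => x + ev q.1 q.2) h (xev_cont _)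
  exact (h1.clm_apply ev_cont.continuousAt).add continuousAt_const

lemma ph_ctt (hd : 0 < d) (hu : ContDiffOn ℝ 2 u (ball x d)) (t p : ℝ) (ht : t < Real.log d) :
    ContinuousAt (fun q : ℝ × ℝ => phtt u x q.1 q.2) (t, p) := by
  have h := (c2_facts hu (ev_mem hd ht p)).2.1.continuousAt
  have h1 := ContinuousAt.comp (x := ((t, p) : ℝ × ℝ)) (f := fun q : ℝ × ℝ => x + ev q.1 q.2) h (xev_cont _)
  have h' := (c2_facts hu (ev_mem hd ht p)).2.2
  have h2 := ContinuousAt.comp (x := ((t, p) : ℝ × ℝ)) (f := fun q : ℝ × ℝ => x + ev q.1 q.2) h' (xev_cont _)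
  exact ((h2.clm_apply ev_cont.continuousAt).clm_apply ev_cont.continuousAt).add
    (h1.clm_apply ev_cont.continuousAt)

lemma ph_cpp (hd : 0 < d) (hu : ContDiffOn ℝ 2 u (ball x d)) (t p : ℝ) (ht : t < Real.log d) :
    ContinuousAt (fun q : ℝ × ℝ => phpp u x q.1 q.2) (t, p) := by
  have h := (c2_facts hu (ev_mem hd ht p)).2.1.continuousAt
  have h1 := ContinuousAt.comp (x := ((t, p) : ℝ × ℝ)) (f := fun q : ℝ × ℝ => x + ev q.1 q.2) h (xev_cont _)
  have h' := (c2_facts hu (ev_mem hd ht p)).2.2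
  have h2 := ContinuousAt.comp (x := ((t, p) : ℝ × ℝ)) (f := fun q : ℝ × ℝ => x + ev q.1 q.2) h' (xev_cont _)
  exact ((h2.clm_apply eo_cont.continuousAt).clm_apply eo_cont.continuousAt).add
    (h1.clm_apply ev_cont.neg.continuousAt)

lemma pd_pd (hu : ContDiffOn ℝ 2 u (ball x d)) {y : E2} (hy : y ∈ ball x d) (j : Fin 2) :
    pd j (pd j u) y = fderiv ℝ (fderiv ℝ u) y (EuclideanSpace.single j 1) (EuclideanSpace.single j 1) := by
  have h := (c2_facts hu hy).2.1
  have h1 := h.clm_apply (hasFDerivAt_const (EuclideanSpace.single j 1 : E2) y)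
  have h2 : HasFDerivAt (pd j u) _ y := h1
  change fderiv ℝ (pd j u) y _ = _
  rw [h2.fderiv]
  simp

lemma ph_lap (hd : 0 < d) (hu : ContDiffOn ℝ 2 u (ball x d)) (t p : ℝ) (ht : t < Real.log d) :
    phtt u x t p + phpp u x t p = Real.exp (2 * t) * lapl u (x + ev t p) := by
  have hm := ev_mem (x := x) hd ht p
  unfold lapl
  rw [pd_pd hu hm, pd_pd hu hm]
  unfold phtt phpp
  generalize fderiv ℝ (fderiv ℝ u) (x + ev t p) = B
  generalize fderiv ℝ u (x + ev t p) = D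
  rw [map_neg]
  unfold ev eo
  simp only [map_add, map_smul, _root_.add_apply, _root_.smul_apply,
    smul_eq_mul]
  have h1 : Real.exp (2 * t) = Real.exp t * Real.exp t := by rw [← Real.exp_add]; ring_nf
  rw [h1]
  have h2 := Real.sin_sq_add_cos_sq p
  linear_combination (Real.exp t * Real.exp t * (B (EuclideanSpace.single 0 1) (EuclideanSpace.single 0 1) + B (EuclideanSpace.single 1 1) (EuclideanSpace.single 1 1))) * h2

end

lemma ev_per (t p : ℝ) : ev t (toIcoMod Real.two_pi_pos 0 p) = ev t p := by
  have h : toIcoMod Real.two_pi_pos 0 p = p - toIcoDiv Real.two_pi_pos 0 p * (2 * Real.pi) := by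
    rw [← self_sub_toIcoDiv_zsmul]; simp
  unfold ev
  rw [h, Real.cos_sub_int_mul_two_pi, Real.sin_sub_int_mul_two_pi]

open Topology in
lemma lt_of_deriv2_neg {f f' : ℝ → ℝ} {x c : ℝ}
    (hf : ∀ᶠ y in 𝓝 x, HasDerivAt f (f' y) y) (h0 : f' x ≤ 0)
    (h2 : HasDerivAt f' c x) (hc : c < 0) : ∀ᶠ y in 𝓝[>] x, f y < f x := by
  have h3 : ∀ᶠ y in 𝓝[>] x, f' y < 0 := by
    have := hasDerivAt_iff_tendsto_slope.1 h2
    have h4 : ∀ᶠ y in 𝓝[≠] x, slope f' x y < 0 := this.eventually (gt_mem_nhds hc)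
    have h5 : ∀ᶠ y in 𝓝[>] x, slope f' x y < 0 :=
      h4.filter_mono (nhdsWithin_mono _ (fun y hy => ne_of_gt hy))
    filter_upwards [h5, self_mem_nhdsWithin] with y hy hy2
    rw [slope_def_field] at hy
    have hpos : 0 < y - x := sub_pos.2 hy2
    rw [div_lt_iff₀ hpos] at hy
    linarith
  obtain ⟨e1, he1, h6⟩ := mem_nhdsGT_iff_exists_Ioo_subset.1 h3
  obtain ⟨e2, he2, h7⟩ := Metric.eventually_nhds_iff.1 hf
  have he1' : x < e1 := he1
  have : Set.Ioo x (min e1 (x + e2)) ∈ 𝓝[>] x :=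
    Ioo_mem_nhdsGT (lt_min he1' (by linarith))
  filter_upwards [this] with y hy
  have hy1 : y < e1 := lt_of_lt_of_le hy.2 (min_le_left _ _)
  have hy2 : y < x + e2 := lt_of_lt_of_le hy.2 (min_le_right _ _)
  have hd : ∀ z ∈ Set.Icc x y, HasDerivAt f (f' z) z := by
    intro z hz
    apply h7
    rw [Real.dist_eq, abs_lt]
    constructor <;> linarith [hz.1, hz.2]
  have hanti : StrictAntiOn f (Set.Icc x y) := by
    apply strictAntiOn_of_deriv_neg (convex_Icc x y)
    · intro z hz
      exact (hd z hz).continuousAt.continuousWithinAt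
    · intro z hz
      rw [interior_Icc] at hz
      rw [(hd z ⟨hz.1.le, hz.2.le⟩).deriv]
      exact h6 ⟨hz.1, hz.2.trans hy1⟩
  exact hanti ⟨le_rfl, hy.1.le⟩ ⟨hy.1.le, le_rfl⟩ hy.1

open Topology in
lemma deriv2_nonneg_of_min {f f' : ℝ → ℝ} {x c : ℝ}
    (hf : ∀ᶠ y in 𝓝 x, HasDerivAt f (f' y) y)
    (h2 : HasDerivAt f' c x) (hm : IsLocalMin f x) : 0 ≤ c := by
  by_contra hc
  push Not at hc
  have h0 : f' x = 0 := hm.hasDerivAt_eq_zero hf.self_of_nhds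
  have h1 := lt_of_deriv2_neg hf h0.le h2 hc
  have h3 : ∀ᶠ y in 𝓝[>] x, f x ≤ f y := hm.filter_mono nhdsWithin_le_nhds
  obtain ⟨y, hy1, hy2⟩ := (h1.and h3).exists
  linarith

open Topology in
/-- Abstract moving plane argument. -/
lemma moving_plane (G Gt Gtt Gp Gpp : ℝ → ℝ → ℝ → ℝ) (T T1 l0 l1 : ℝ) (hT : T < T1)
    (hl1 : l1 < T)
    (hc : ∀ l t p, t < T1 → 2 * l - t < T1 →
      ContinuousAt (fun q : ℝ × ℝ × ℝ => G q.1 q.2.1 q.2.2) (l, t, p))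
    (hct : ∀ l t p, t < T1 → 2 * l - t < T1 →
      ContinuousAt (fun q : ℝ × ℝ × ℝ => Gt q.1 q.2.1 q.2.2) (l, t, p))
    (hper : ∀ l t p, G l t (toIcoMod Real.two_pi_pos 0 p) = G l t p)
    (hdt : ∀ l t p, t < T1 → 2 * l - t < T1 → HasDerivAt (fun t => G l t p) (Gt l t p) t)
    (hdtt : ∀ l t p, t < T1 → 2 * l - t < T1 → HasDerivAt (fun t => Gt l t p) (Gtt l t p) t)
    (hdp : ∀ l t p, t < T1 → 2 * l - t < T1 → HasDerivAt (fun p => G l t p) (Gp l t p) p)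
    (hdpp : ∀ l t p, t < T1 → 2 * l - t < T1 → HasDerivAt (fun p => Gp l t p) (Gpp l t p) p)
    (hdiag : ∀ l p, G l l p = 0)
    (hstart : ∀ l ≤ l0, ∀ t, l ≤ t → t ≤ T → ∀ p, 0 ≤ G l t p)
    (hout : ∀ l ≤ l1, ∀ p, 0 < G l T p)
    (hint : ∀ l ≤ l1, ∀ t, l ≤ t → t ≤ T → ∀ p, G l t p = 0 → Gtt l t p + Gpp l t p < 0) :
    ∀ l ≤ l1, ∀ t, l ≤ t → t ≤ T → ∀ p, 0 ≤ G l t p := by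
  by_contra hcon
  push Not at hcon
  obtain ⟨lb, hlb, tb, htb1, htb2, pb, hGb⟩ := hcon
  set Bad : Set ℝ := {l | l ≤ l1 ∧ ∃ t, l ≤ t ∧ t ≤ T ∧ ∃ p, G l t p < 0} with hBad
  have hne : Bad.Nonempty := ⟨lb, hlb, tb, htb1, htb2, pb, hGb⟩
  have hbdd : BddBelow Bad := by
    refine ⟨l0, ?_⟩
    rintro l ⟨_, t, h1, h2, p, h3⟩
    by_contra hl
    push Not at hl
    exact absurd (hstart l hl.le t h1 h2 p) (not_le.2 h3)
  set ls := sInf Bad with hls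
  have hlsle : ls ≤ l1 := (csInf_le hbdd hne.some_mem).trans hne.some_mem.1
  have hbelow : ∀ l < ls, ∀ t, l ≤ t → t ≤ T → ∀ p, 0 ≤ G l t p := by
    intro l hl t h1 h2 p
    by_contra h3
    push Not at h3
    exact absurd (csInf_le hbdd (show l ∈ Bad from ⟨by linarith, t, h1, h2, p, h3⟩)) (not_le.2 hl)
  have hat : ∀ t, ls ≤ t → t ≤ T → ∀ p, 0 ≤ G ls t p := by
    intro t h1 h2 p
    rcases h1.eq_or_lt with h | h
    · rw [← h, hdiag]
    · have hcc : ContinuousAt (fun l => G l t p) ls := by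
        have h3 := hc ls t p (by linarith) (by linarith)
        exact ContinuousAt.comp (f := fun l : ℝ => (l, t, p))
          (g := fun q : ℝ × ℝ × ℝ => G q.1 q.2.1 q.2.2) h3 (by fun_prop)
      have h4 : Tendsto (fun l => G l t p) (𝓝[<] ls) (𝓝 (G ls t p)) :=
        hcc.tendsto.mono_left nhdsWithin_le_nhds
      refine ge_of_tendsto h4 ?_
      filter_upwards [self_mem_nhdsWithin] with l hl
      exact hbelow l hl t ((le_of_lt hl).trans h1) h2 p
  -- sequence
  obtain ⟨lk, hlk1, hlk2, hlk3⟩ := exists_seq_tendsto_sInf hne hbdd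
  have hlk3' : ∀ n, lk n ≤ l1 ∧ ∃ t, lk n ≤ t ∧ t ≤ T ∧ ∃ p, G (lk n) t p < 0 := hlk3
  choose hk1 tk hk2 hk3 pk' hk4' using hlk3'
  set pk := fun n => toIcoMod Real.two_pi_pos 0 (pk' n) with hpk
  have hk4 : ∀ n, G (lk n) (tk n) (pk n) < 0 := by
    intro n; rw [hpk]; simp only; rw [hper]; exact hk4' n
  have hlkge : ∀ n, ls ≤ lk n := fun n => csInf_le hbdd (hlk3 n)
  have hcomp : IsCompact (Set.Icc ls T ×ˢ Set.Icc (0:ℝ) (2 * Real.pi)) :=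
    isCompact_Icc.prod isCompact_Icc
  have hmem : ∀ n, (tk n, pk n) ∈ Set.Icc ls T ×ˢ Set.Icc (0:ℝ) (2 * Real.pi) := by
    intro n
    refine ⟨⟨(hlkge n).trans (hk2 n), hk3 n⟩, ?_⟩
    have := toIcoMod_mem_Ico Real.two_pi_pos 0 (pk' n)
    rw [zero_add] at this
    exact ⟨this.1, this.2.le⟩
  obtain ⟨⟨ts, ps⟩, hmem', σ, hσ, hlim⟩ := hcomp.tendsto_subseq hmem
  have hlimt : Tendsto (fun n => tk (σ n)) atTop (𝓝 ts) := (Continuous.tendsto continuous_fst _).comp hlim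
  have hlimp : Tendsto (fun n => pk (σ n)) atTop (𝓝 ps) := (Continuous.tendsto continuous_snd _).comp hlim
  have hliml : Tendsto (fun n => lk (σ n)) atTop (𝓝 ls) := hlk2.comp hσ.tendsto_atTop
  have hts1 : ls ≤ ts := hmem'.1.1
  have hts2 : ts ≤ T := hmem'.1.2
  have hG0 : G ls ts ps = 0 := by
    apply le_antisymm _ (hat ts hts1 hts2 ps)
    have h1 : Tendsto (fun n => G (lk (σ n)) (tk (σ n)) (pk (σ n))) atTop (𝓝 (G ls ts ps)) :=
      (hc ls ts ps (by linarith) (by linarith)).tendsto.comp (hliml.prodMk_nhds (hlimt.prodMk_nhds hlimp))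
    exact le_of_tendsto h1 (Eventually.of_forall fun n => (hk4 _).le)
  have hI := hint ls hlsle ts hts1 hts2 ps hG0
  have htsT : ts < T := by
    rcases hts2.eq_or_lt with h | h
    · have := hout ls hlsle ps
      rw [← h, hG0] at this
      exact absurd this (lt_irrefl _)
    · exact h
  have hev : ∀ᶠ t in 𝓝 ts, HasDerivAt (fun t => G ls t ps) (Gt ls t ps) t := by
    have h1 : ∀ᶠ t in 𝓝 ts, t < T1 := gt_mem_nhds (by linarith)
    have h2 : ∀ᶠ t in 𝓝 ts, 2 * ls - T1 < t := lt_mem_nhds (by linarith)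
    filter_upwards [h1, h2] with t h1 h2
    exact hdt ls t ps h1 (by linarith)
  have hd2 := hdtt ls ts ps (by linarith) (by linarith)
  rcases hts1.eq_or_lt with h | h
  · -- boundary case
    have hpp0 : Gpp ls ts ps = 0 := by
      have hGp0 : ∀ p, Gp ls ts p = 0 := by
        intro p
        have h1 := hdp ls ts p (by linarith) (by linarith)
        have h2 : (fun p => G ls ts p) = fun _ => 0 := by
          funext q; rw [← h]; exact hdiag ls q
        rw [h2] at h1
        exact h1.unique (hasDerivAt_const _ _)
      have h1 := hdpp ls ts ps (by linarith) (by linarith)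
      have h2 : (fun p => Gp ls ts p) = fun _ => 0 := by
        funext q; exact hGp0 q
      rw [h2] at h1
      exact h1.unique (hasDerivAt_const _ _)
    have htneg : Gt ls ts ps ≤ 0 := by
      have hx : ∀ n, ∃ ξ ∈ Set.Icc (lk n) (tk n), Gt (lk n) ξ (pk n) ≤ 0 := by
        intro n
        have hlt : lk n < tk n := by
          rcases (hk2 n).eq_or_lt with h' | h'
          · have := hk4 n
            rw [← h', hdiag] at this
            exact absurd this (lt_irrefl _)
          · exact h'
        have hD : ∀ t ∈ Set.Icc (lk n) (tk n), HasDerivAt (fun t => G (lk n) t (pk n)) (Gt (lk n) t (pk n)) t := by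
          intro t ht
          have := hk3 n
          exact hdt _ _ _ (by linarith [ht.2]) (by linarith [ht.1, ht.2])
        obtain ⟨ξ, hξ, he⟩ := exists_hasDerivAt_eq_slope (fun t => G (lk n) t (pk n))
          (fun t => Gt (lk n) t (pk n)) hlt
          (fun t ht => (hD t ht).continuousAt.continuousWithinAt)
          (fun t ht => hD t ⟨ht.1.le, ht.2.le⟩)
        refine ⟨ξ, ⟨hξ.1.le, hξ.2.le⟩, ?_⟩
        rw [he, hdiag]
        apply div_nonpos_of_nonpos_of_nonneg
        · linarith [hk4 n]
        · linarith
      choose ξ hξ1 hξ2 using hx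
      have hlimx : Tendsto (fun n => ξ (σ n)) atTop (𝓝 ts) := by
        refine tendsto_of_tendsto_of_tendsto_of_le_of_le (h ▸ hliml) hlimt ?_ ?_
        · intro n; exact (hξ1 _).1
        · intro n; exact (hξ1 _).2
      have h1 : Tendsto (fun n => Gt (lk (σ n)) (ξ (σ n)) (pk (σ n))) atTop (𝓝 (Gt ls ts ps)) :=
        (hct ls ts ps (by linarith) (by linarith)).tendsto.comp
          (hliml.prodMk_nhds (hlimx.prodMk_nhds hlimp))
      exact le_of_tendsto h1 (Eventually.of_forall fun n => hξ2 _)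
    have h1 := lt_of_deriv2_neg hev htneg hd2 (by linarith)
    have h2 : Set.Ioo ts T ∈ 𝓝[>] ts := Ioo_mem_nhdsGT htsT
    obtain ⟨y, hy1, hy2⟩ := (h1.and h2).exists
    have := hat y (by linarith [hy2.1]) hy2.2.le ps
    linarith
  · have ha : 0 ≤ Gtt ls ts ps := by
      refine deriv2_nonneg_of_min hev hd2 ?_
      have h1 : Set.Ioo ls T ∈ 𝓝 ts := Ioo_mem_nhds h htsT
      filter_upwards [h1] with t ht
      rw [hG0]
      exact hat t ht.1.le ht.2.le ps
    have hb : 0 ≤ Gpp ls ts ps := by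
      refine deriv2_nonneg_of_min (f := fun p => G ls ts p) (f' := fun p => Gp ls ts p) ?_
        (hdpp ls ts ps (by linarith) (by linarith)) ?_
      · exact Eventually.of_forall fun p => hdp ls ts p (by linarith) (by linarith)
      · refine Eventually.of_forall fun p => ?_
        simp only
        rw [hG0]
        exact hat ts hts1 hts2 p
    linarith

open Topology in
lemma hasDerivAt_param (f f' : ℝ → ℝ → ℝ) (T1 : ℝ)
    (hc : ∀ t p, t < T1 → ContinuousAt (fun q : ℝ × ℝ => f q.1 q.2) (t, p))
    (hc' : ∀ t p, t < T1 → ContinuousAt (fun q : ℝ × ℝ => f' q.1 q.2) (t, p))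
    (hd : ∀ t p, t < T1 → HasDerivAt (fun t => f t p) (f' t p) t) (t : ℝ) (ht : t < T1) :
    HasDerivAt (fun t => ∫ p in (0:ℝ)..(2 * Real.pi), f t p)
      (∫ p in (0:ℝ)..(2 * Real.pi), f' t p) t := by
  have hcs : ∀ t < T1, Continuous (fun p => f t p) := by
    intro t ht
    rw [continuous_iff_continuousAt]
    intro p
    exact ContinuousAt.comp (f := fun p : ℝ => (t, p)) (g := fun q : ℝ × ℝ => f q.1 q.2)
      (hc t p ht) (by fun_prop)
  have hcs' : ∀ t < T1, Continuous (fun p => f' t p) := by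
    intro t ht
    rw [continuous_iff_continuousAt]
    intro p
    exact ContinuousAt.comp (f := fun p : ℝ => (t, p)) (g := fun q : ℝ × ℝ => f' q.1 q.2)
      (hc' t p ht) (by fun_prop)
  set e := (T1 - t) / 2 with he
  have hepos : 0 < e := by rw [he]; linarith
  have hK : IsCompact (Set.Icc (t - e) (t + e) ×ˢ Set.uIcc (0:ℝ) (2 * Real.pi)) :=
    isCompact_Icc.prod isCompact_uIcc
  obtain ⟨C, hC⟩ := hK.exists_bound_of_continuousOn (f := fun q : ℝ × ℝ => f' q.1 q.2) (by
    rintro ⟨t', p'⟩ ⟨h1, _⟩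
    have h1' : t' ≤ t + e := h1.2
    exact (hc' t' p' (by rw [he] at h1'; linarith)).continuousWithinAt)
  have hs : Set.Icc (t - e) (t + e) ∈ 𝓝 t := Icc_mem_nhds (by linarith) (by linarith)
  refine (intervalIntegral.hasDerivAt_integral_of_dominated_loc_of_deriv_le
    (F := f) (F' := f') (bound := fun _ => C) hs ?_ ?_ ?_ ?_ ?_ ?_).2
  · filter_upwards [gt_mem_nhds ht] with t' ht'
    exact (hcs t' ht').aestronglyMeasurable
  · exact (hcs t ht).intervalIntegrable _ _
  · exact (hcs' t ht).aestronglyMeasurable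
  · refine Eventually.of_forall fun p hp t' ht' => ?_
    exact hC (t', p) ⟨ht', Set.uIoc_subset_uIcc hp⟩
  · exact intervalIntegrable_const
  · refine Eventually.of_forall fun p hp t' ht' => ?_
    refine hd t' p ?_
    have := ht'.2
    rw [he] at this
    linarith

open Topology in
lemma mono_lim {g g' : ℝ → ℝ} {T1 l : ℝ} (hd : ∀ t < T1, HasDerivAt g (g' t) t)
    (hn : ∀ t < T1, 0 ≤ g' t) (hl : Tendsto g atBot (𝓝 l)) {t : ℝ} (ht : t < T1) : l ≤ g t := by
  refine le_of_tendsto hl ?_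
  filter_upwards [eventually_le_atBot t] with r hr
  have : MonotoneOn g (Set.Iio T1) := by
    apply monotoneOn_of_deriv_nonneg (convex_Iio T1)
    · intro z hz
      exact (hd z hz).continuousAt.continuousWithinAt
    · intro z hz
      rw [interior_Iio] at hz
      exact (hd z hz).differentiableAt.differentiableWithinAt
    · intro z hz
      rw [interior_Iio] at hz
      rw [(hd z hz).deriv]
      exact hn z hz
  exact this (show r < T1 by linarith) ht hr

open Topology in
lemma mean_contra (φ φt φtt φp φpp W : ℝ → ℝ → ℝ) (T1 M a b C ℓ : ℝ)
    (hc : ∀ t p, t < T1 → ContinuousAt (fun q : ℝ × ℝ => φ q.1 q.2) (t, p))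
    (hct : ∀ t p, t < T1 → ContinuousAt (fun q : ℝ × ℝ => φt q.1 q.2) (t, p))
    (hctt : ∀ t p, t < T1 → ContinuousAt (fun q : ℝ × ℝ => φtt q.1 q.2) (t, p))
    (hcpp : ∀ t p, t < T1 → ContinuousAt (fun q : ℝ × ℝ => φpp q.1 q.2) (t, p))
    (hdt : ∀ t p, t < T1 → HasDerivAt (fun t => φ t p) (φt t p) t)
    (hdtt : ∀ t p, t < T1 → HasDerivAt (fun t => φt t p) (φtt t p) t)
    (hdpp : ∀ t p, t < T1 → HasDerivAt (fun p => φp t p) (φpp t p) p)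
    (hper : ∀ t, φp t (2 * Real.pi) = φp t 0)
    (hpde : ∀ t p, t < T1 → φtt t p + φpp t p = -(W t p * Real.exp (φ t p)))
    (ha : 0 < a) (hW : ∀ t p, t < T1 → a ≤ W t p ∧ W t p ≤ b)
    (hM : ∀ t p, t < T1 → φ t p ≤ M + 2 * t)
    (hL0 : ∀ t p, t < T1 → |φ t p - 2 * t - M| ≤ C * Real.exp t)
    (hL1 : ∀ t p, t < T1 → |φt t p - 2| ≤ C * Real.exp t)
    (hT : -M/2 + ℓ < T1) (hℓ0 : 0 ≤ ℓ) (hℓ : 2 < ℓ * (a * Real.exp (-b/4)))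
    (hmono : ∀ t p, t ≤ -M/2 + ℓ → 0 ≤ φt t p) : False := by
  have slice : ∀ g : ℝ → ℝ → ℝ, (∀ t p, t < T1 → ContinuousAt (fun q : ℝ × ℝ => g q.1 q.2) (t, p)) →
      ∀ t < T1, Continuous (fun p => g t p) := by
    intro g hg t ht
    rw [continuous_iff_continuousAt]
    intro p
    exact ContinuousAt.comp (f := fun p : ℝ => (t, p)) (g := fun q : ℝ × ℝ => g q.1 q.2)
      (hg t p ht) (by fun_prop)
  have hpi := Real.pi_pos
  set f := fun t => ∫ p in (0:ℝ)..(2 * Real.pi), φ t p with hf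
  set f1 := fun t => ∫ p in (0:ℝ)..(2 * Real.pi), φt t p with hf1
  set f2 := fun t => ∫ p in (0:ℝ)..(2 * Real.pi), φtt t p with hf2
  have d1 : ∀ t < T1, HasDerivAt f (f1 t) t := fun t ht => hasDerivAt_param φ φt T1 hc hct hdt t ht
  have d2 : ∀ t < T1, HasDerivAt f1 (f2 t) t := fun t ht => hasDerivAt_param φt φtt T1 hct hctt hdtt t ht
  have iφ : ∀ t < T1, IntervalIntegrable (fun p => φ t p) volume 0 (2 * Real.pi) :=
    fun t ht => (slice φ hc t ht).intervalIntegrable _ _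
  have iφt : ∀ t < T1, IntervalIntegrable (fun p => φt t p) volume 0 (2 * Real.pi) :=
    fun t ht => (slice φt hct t ht).intervalIntegrable _ _
  have iφtt : ∀ t < T1, IntervalIntegrable (fun p => φtt t p) volume 0 (2 * Real.pi) :=
    fun t ht => (slice φtt hctt t ht).intervalIntegrable _ _
  have iφpp : ∀ t < T1, IntervalIntegrable (fun p => φpp t p) volume 0 (2 * Real.pi) :=
    fun t ht => (slice φpp hcpp t ht).intervalIntegrable _ _
  have hpp0 : ∀ t < T1, (∫ p in (0:ℝ)..(2 * Real.pi), φpp t p) = 0 := by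
    intro t ht
    rw [intervalIntegral.integral_eq_sub_of_hasDerivAt (f := fun p => φp t p)
      (fun p _ => hdpp t p ht) (iφpp t ht), hper, sub_self]
  have hf2eq : ∀ t < T1, f2 t = ∫ p in (0:ℝ)..(2 * Real.pi), (φtt t p + φpp t p) := by
    intro t ht
    rw [intervalIntegral.integral_add (iφtt t ht) (iφpp t ht), hpp0 t ht, add_zero]
  have cint : ∀ k : ℝ, (∫ p in (0:ℝ)..(2 * Real.pi), k) = 2 * Real.pi * k := by
    intro k; simp
  have hf2lo : ∀ t < T1, -(2 * Real.pi * (b * Real.exp (M + 2 * t))) ≤ f2 t := by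
    intro t ht
    rw [hf2eq t ht, ← mul_neg, ← cint]
    refine intervalIntegral.integral_mono_on (by positivity) intervalIntegrable_const
      ((iφtt t ht).add (iφpp t ht)) ?_
    intro p _
    rw [hpde t p ht]
    have h1 := hW t p ht
    have h2 := Real.exp_le_exp.2 (hM t p ht)
    have h3 : W t p * Real.exp (φ t p) ≤ b * Real.exp (M + 2 * t) :=
      mul_le_mul h1.2 h2 (Real.exp_pos _).le (by linarith)
    linarith
  have hf2hi : ∀ t < T1, f2 t ≤ 0 := by
    intro t ht
    rw [hf2eq t ht]
    refine le_trans (b := ∫ p in (0:ℝ)..(2 * Real.pi), (0:ℝ)) (intervalIntegral.integral_mono_on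
      (by positivity) ((iφtt t ht).add (iφpp t ht)) intervalIntegrable_const ?_) (by simp)
    intro p _
    rw [hpde t p ht]
    have h1 := hW t p ht
    have : 0 ≤ W t p * Real.exp (φ t p) := mul_nonneg (by linarith) (Real.exp_pos _).le
    linarith
  -- limits at -∞
  have lexp : Tendsto (fun t : ℝ => 2 * Real.pi * (C * Real.exp t)) atBot (𝓝 0) := by
    have := (Real.tendsto_exp_atBot.const_mul C).const_mul (2 * Real.pi)
    simpa using this
  have lf1 : Tendsto f1 atBot (𝓝 (4 * Real.pi)) := by
    rw [tendsto_iff_norm_sub_tendsto_zero]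
    refine squeeze_zero_norm' ?_ lexp
    filter_upwards [eventually_lt_atBot T1] with t ht
    have : f1 t - 4 * Real.pi = ∫ p in (0:ℝ)..(2 * Real.pi), (φt t p - 2) := by
      rw [intervalIntegral.integral_sub (iφt t ht) intervalIntegrable_const, cint]
      simp only [hf1]; ring
    rw [norm_norm, this]
    have := intervalIntegral.norm_integral_le_of_norm_le_const (a := 0) (b := 2 * Real.pi)
      (f := fun p => φt t p - 2) (C := C * Real.exp t) (fun p _ => hL1 t p ht)
    rw [sub_zero, abs_of_pos (by positivity)] at this
    linarith
  have lf : Tendsto (fun t => f t - 4 * Real.pi * t) atBot (𝓝 (2 * Real.pi * M)) := by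
    rw [tendsto_iff_norm_sub_tendsto_zero]
    refine squeeze_zero_norm' ?_ lexp
    filter_upwards [eventually_lt_atBot T1] with t ht
    have : f t - 4 * Real.pi * t - 2 * Real.pi * M
        = ∫ p in (0:ℝ)..(2 * Real.pi), (φ t p - 2 * t - M) := by
      rw [intervalIntegral.integral_sub ((iφ t ht).sub intervalIntegrable_const)
        intervalIntegrable_const,
        intervalIntegral.integral_sub (iφ t ht) intervalIntegrable_const, cint, cint]
      simp only [hf]; ring
    rw [norm_norm, this]
    have := intervalIntegral.norm_integral_le_of_norm_le_const (a := 0) (b := 2 * Real.pi)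
      (f := fun p => φ t p - 2 * t - M) (C := C * Real.exp t) (fun p _ => hL0 t p ht)
    rw [sub_zero, abs_of_pos (by positivity)] at this
    linarith
  have lE : Tendsto (fun t : ℝ => Real.exp (M + 2 * t)) atBot (𝓝 0) := by
    refine Real.tendsto_exp_atBot.comp ?_
    exact tendsto_atBot_add_const_left _ _ (tendsto_id.const_mul_atBot (by norm_num))
  have dE : ∀ t : ℝ, HasDerivAt (fun t : ℝ => Real.exp (M + 2 * t)) (Real.exp (M + 2 * t) * 2) t := by
    intro t
    have := (((hasDerivAt_id t).const_mul 2).const_add M).exp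
    simpa using this
  -- f1 ≤ 4π
  have b1 : ∀ t < T1, f1 t ≤ 4 * Real.pi := by
    intro t ht
    have := mono_lim (g := fun t => -f1 t) (g' := fun t => -f2 t) (T1 := T1) (l := -(4 * Real.pi))
      (fun t ht => (d2 t ht).neg) (fun t ht => by linarith [hf2hi t ht]) lf1.neg ht
    linarith
  have b2 : ∀ t < T1, 4 * Real.pi ≤ f1 t + Real.pi * b * Real.exp (M + 2 * t) := by
    intro t ht
    have hl := lf1.add (lE.const_mul (Real.pi * b))
    rw [mul_zero, add_zero] at hl
    refine mono_lim (g := fun t => f1 t + Real.pi * b * Real.exp (M + 2 * t))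
      (fun t ht => (d2 t ht).add ((dE t).const_mul (Real.pi * b))) ?_ hl ht
    intro t ht
    linarith [hf2lo t ht]
  have b3 : ∀ t < T1, 2 * Real.pi * M ≤ f t - 4 * Real.pi * t + Real.pi * b / 2 * Real.exp (M + 2 * t) := by
    intro t ht
    have hl := lf.add (lE.const_mul (Real.pi * b / 2))
    rw [mul_zero, add_zero] at hl
    refine mono_lim (g := fun t => f t - 4 * Real.pi * t + Real.pi * b / 2 * Real.exp (M + 2 * t))
      (fun t ht => ((d1 t ht).sub ((hasDerivAt_id t).const_mul (4 * Real.pi))).add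
        ((dE t).const_mul (Real.pi * b / 2))) ?_ hl ht
    intro t ht
    linarith [b2 t ht]
  have h0 : -M/2 < T1 := by linarith
  have b4 : -(Real.pi * b / 2) ≤ f (-M/2) := by
    have := b3 (-M/2) h0
    rw [show M + 2 * (-M/2) = 0 by ring, Real.exp_zero] at this
    linarith
  have b5 : ∀ t ∈ Set.Icc (-M/2) (-M/2+ℓ), -(Real.pi * b / 2) ≤ f t := by
    intro t ht
    have hm : MonotoneOn f (Set.Icc (-M/2) (-M/2+ℓ)) := by
      apply monotoneOn_of_deriv_nonneg (convex_Icc _ _)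
      · intro z hz
        exact (d1 z (by linarith [hz.2])).continuousAt.continuousWithinAt
      · intro z hz
        rw [interior_Icc] at hz
        exact (d1 z (by linarith [hz.2])).differentiableAt.differentiableWithinAt
      · intro z hz
        rw [interior_Icc] at hz
        rw [(d1 z (by linarith [hz.2])).deriv]
        exact intervalIntegral.integral_nonneg (by positivity) (fun p _ => hmono z p hz.2.le)
    exact b4.trans (hm ⟨le_rfl, by linarith⟩ ht ht.1)
  have b6 : ∀ t ∈ Set.Icc (-M/2) (-M/2+ℓ), f2 t ≤ -(2 * Real.pi * (a * Real.exp (-b/4))) := by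
    intro t ht
    have htT : t < T1 := by linarith [ht.2]
    rw [hf2eq t htT]
    have key : (∫ p in (0:ℝ)..(2 * Real.pi), (φtt t p + φpp t p)) ≤
        ∫ p in (0:ℝ)..(2 * Real.pi), (-(a * Real.exp (-b/4))) * (φ t p + (1 + b/4)) := by
      refine intervalIntegral.integral_mono_on (by positivity)
        ((iφtt t htT).add (iφpp t htT)) (((iφ t htT).add intervalIntegrable_const).const_mul _) ?_
      intro p _
      rw [hpde t p htT]
      have h1 := (hW t p htT).1
      have h2 : Real.exp (-b/4) * (φ t p + (1 + b/4)) ≤ Real.exp (φ t p) := by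
        have h3 := Real.add_one_le_exp (φ t p - (-b/4))
        have h4 : Real.exp (φ t p) = Real.exp (-b/4) * Real.exp (φ t p - (-b/4)) := by
          rw [← Real.exp_add]; ring_nf
        rw [h4]
        apply mul_le_mul_of_nonneg_left _ (Real.exp_pos _).le
        linarith
      have h5 : a * Real.exp (φ t p) ≤ W t p * Real.exp (φ t p) :=
        mul_le_mul_of_nonneg_right h1 (Real.exp_pos _).le
      have h6 := mul_le_mul_of_nonneg_left h2 ha.le
      linarith
    refine key.trans ?_
    rw [intervalIntegral.integral_const_mul,
      intervalIntegral.integral_add (iφ t htT) intervalIntegrable_const, cint]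
    have h7 : 2 * Real.pi ≤ (∫ p in (0:ℝ)..(2 * Real.pi), φ t p) + 2 * Real.pi * (1 + b/4) := by
      have := b5 t ht
      simp only [hf] at this
      linarith
    have h8 : 0 < a * Real.exp (-b/4) := by positivity
    have := mul_le_mul_of_nonneg_left h7 h8.le
    linarith
  have b7 : f1 (-M/2+ℓ) - f1 (-M/2) ≤ -(2 * Real.pi * (a * Real.exp (-b/4))) * (-M/2+ℓ - (-M/2)) := by
    refine (convex_Icc (-M/2) (-M/2+ℓ)).image_sub_le_mul_sub_of_deriv_le ?_ ?_ ?_ _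
      ⟨le_rfl, by linarith⟩ _ ⟨by linarith, le_rfl⟩ (by linarith)
    · intro z hz
      exact (d2 z (by linarith [hz.2])).continuousAt.continuousWithinAt
    · intro z hz
      rw [interior_Icc] at hz
      exact (d2 z (by linarith [hz.2])).differentiableAt.differentiableWithinAt
    · intro z hz
      rw [interior_Icc] at hz
      rw [(d2 z (by linarith [hz.2])).deriv]
      exact b6 z ⟨hz.1.le, hz.2.le⟩
  have b8 : 0 ≤ f1 (-M/2+ℓ) :=
    intervalIntegral.integral_nonneg (by positivity) (fun p _ => hmono _ p le_rfl)
  have b9 := b1 (-M/2) h0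
  have : 2 * Real.pi * (a * Real.exp (-b/4)) * ℓ ≤ 4 * Real.pi := by linarith
  have h10 := mul_lt_mul_of_pos_left hℓ (show 0 < 2 * Real.pi by positivity)
  linarith

lemma core (u V : E2 → ℝ) (x : E2) (d M a b A s ℓ η : ℝ) (hd : 0 < d) (hd1 : d ≤ 1)
    (hu : ContDiffOn ℝ 2 u (ball x d)) (hM : u x = M) (hMpos : 0 < M)
    (hu0 : ∀ y ∈ ball x d, 0 ≤ u y) (huM : ∀ y ∈ ball x d, u y ≤ M)
    (hpde : ∀ y ∈ ball x d, -(lapl u y) = V y * Real.exp (u y))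
    (ha : 0 < a) (hV : ∀ y ∈ ball x d, a ≤ V y ∧ V y ≤ b) (hA : 0 ≤ A)
    (hs0 : 0 < s) (hs1 : s ≤ 1)
    (hVh : ∀ y ∈ ball x d, ∀ z ∈ ball x d, |V y - V z| ≤ A * ‖y - z‖ ^ s)
    (hℓ0 : 0 ≤ ℓ) (hℓ : 2 < ℓ * (a * Real.exp (-b/4)))
    (hη : η = (A + 1) * Real.exp (2 * ℓ + s * (-M/2 + ℓ))) (hη1 : η ≤ 1) (hηM : η * M ≤ 2) :
    M + 4 * Real.log d ≤ 4 * ℓ + 4 * Real.log 2 + 1 := by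
  by_contra hcon
  push Not at hcon
  have hηpos : 0 < η := by rw [hη]; positivity
  set T := Real.log (d / 2) with hTdef
  have hTeq : T = Real.log d - Real.log 2 := Real.log_div hd.ne' (by norm_num)
  have hlog2 : 0 < Real.log 2 := Real.log_pos (by norm_num)
  have hT : T < Real.log d := by linarith
  have hT0 : T ≤ 0 := by
    have := Real.log_nonpos hd.le hd1
    linarith
  set l1 := -M/2 + ℓ with hl1
  -- gradient bound
  obtain ⟨L, hL⟩ := (isCompact_closedBall x (d/2)).exists_bound_of_continuousOn
    (f := fderiv ℝ u) (fun y hy => (c2_facts hu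
      (closedBall_subset_ball (by linarith) hy)).2.1.continuousAt.continuousWithinAt)
  set C := max L 1 with hC
  have hC1 : 1 ≤ C := le_max_right _ _
  have hCL : ∀ y ∈ closedBall x (d/2), ‖fderiv ℝ u y‖ ≤ C :=
    fun y hy => (hL y hy).trans (le_max_left _ _)
  have hmem2 : ∀ t p, t ≤ T → x + ev t p ∈ closedBall x (d/2) := by
    intro t p ht
    rw [mem_closedBall, dist_eq_norm, add_sub_cancel_left, ev_norm]
    exact (Real.le_log_iff_exp_le (by linarith)).1 ht
  have hphtb : ∀ t p, t ≤ T → |pht u x t p - 2| ≤ C * Real.exp t := by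
    intro t p ht
    have h1 := (fderiv ℝ u (x + ev t p)).le_opNorm (ev t p)
    rw [ev_norm] at h1
    unfold pht
    rw [add_sub_cancel_right]
    exact h1.trans (mul_le_mul_of_nonneg_right (hCL _ (hmem2 t p ht)) (Real.exp_pos _).le)
  have hphb : ∀ t p, t ≤ T → |ph u x t p - 2 * t - M| ≤ C * Real.exp t := by
    intro t p ht
    have h1 := (convex_closedBall x (d/2)).norm_image_sub_le_of_norm_fderiv_le (𝕜 := ℝ) (f := u)
      (C := C) (x := x) (y := x + ev t p)
      (fun y hy => (c2_facts hu (closedBall_subset_ball (by linarith) hy)).1.differentiableAt)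
      hCL (mem_closedBall_self (by linarith)) (hmem2 t p ht)
    rw [add_sub_cancel_left, ev_norm, hM] at h1
    unfold ph
    rw [show u (x + ev t p) + 2 * t - 2 * t - M = u (x + ev t p) - M by ring]
    exact h1
  have hphM : ∀ t p, t < Real.log d → ph u x t p ≤ M + 2 * t := by
    intro t p ht
    have := huM _ (ev_mem hd ht p)
    unfold ph; linarith
  have hph0 : ∀ t p, t < Real.log d → 2 * t ≤ ph u x t p := by
    intro t p ht
    have := hu0 _ (ev_mem hd ht p)
    unfold ph; linarith
  have hphpde : ∀ t p, t < Real.log d →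
      phtt u x t p + phpp u x t p = -(V (x + ev t p) * Real.exp (ph u x t p)) := by
    intro t p ht
    rw [ph_lap hd hu t p ht]
    have h1 := hpde _ (ev_mem hd ht p)
    unfold ph
    rw [Real.exp_add, ← mul_assoc, ← h1]
    ring
  have hηT : η * (T - l1) ≤ 1 := by
    have h1 : T - l1 ≤ M / 2 := by rw [hl1]; linarith
    have h2 := mul_le_mul_of_nonneg_left h1 hηpos.le
    linarith
  have hl1T : M + 1 < 4 * (T - l1) := by rw [hl1, hTeq]; linarith
  -- correction function
  set h : ℝ → ℝ := fun τ => η * (1 - Real.exp (-τ) - τ) with hh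
  set h' : ℝ → ℝ := fun τ => η * (Real.exp (-τ) - 1) with hh'
  set h'' : ℝ → ℝ := fun τ => -(η * Real.exp (-τ)) with hh''
  have dE : ∀ τ : ℝ, HasDerivAt (fun τ : ℝ => Real.exp (-τ)) (-Real.exp (-τ)) τ := by
    intro τ
    have := (hasDerivAt_id τ).neg.exp
    simpa using this
  have dh : ∀ τ, HasDerivAt h (h' τ) τ := by
    intro τ
    have := (((dE τ).const_sub 1).sub (hasDerivAt_id τ)).const_mul η
    rw [neg_neg] at this
    exact this
  have dh' : ∀ τ, HasDerivAt h' (h'' τ) τ := by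
    intro τ
    have := ((dE τ).sub_const 1).const_mul η
    rw [mul_neg] at this
    exact this
  have hh0 : h 0 = 0 := by simp [hh]
  have hhneg : ∀ τ, h τ ≤ 0 := by
    intro τ
    have h1 := Real.add_one_le_exp (-τ)
    have : 1 - Real.exp (-τ) - τ ≤ 0 := by linarith
    exact mul_nonpos_of_nonneg_of_nonpos hηpos.le this
  have hhlow : ∀ τ, 0 ≤ τ → -(η * τ) ≤ h τ := by
    intro τ hτ
    have h1 : Real.exp (-τ) ≤ 1 := Real.exp_le_one_iff.2 (by linarith)
    have := mul_le_mul_of_nonneg_left (show -τ ≤ 1 - Real.exp (-τ) - τ by linarith) hηpos.le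
    simp only [hh]
    linarith
  have hhc : Continuous h := by simp only [hh]; fun_prop
  have hhc' : Continuous h' := by simp only [hh']; fun_prop
  -- the moving plane function
  have dref : ∀ l t : ℝ, HasDerivAt (fun t : ℝ => 2 * l - t) (-1) t := fun l t => by
    simpa using (hasDerivAt_id t).const_sub (2 * l)
  have dsh : ∀ l t : ℝ, HasDerivAt (fun t : ℝ => t - l) 1 t := fun l t => by
    simpa using (hasDerivAt_id t).sub_const l
  have key := moving_plane
    (fun l t p => ph u x t p - ph u x (2 * l - t) p + h (t - l))
    (fun l t p => pht u x t p + pht u x (2 * l - t) p + h' (t - l))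
    (fun l t p => phtt u x t p - phtt u x (2 * l - t) p + h'' (t - l))
    (fun l t p => php u x t p - php u x (2 * l - t) p)
    (fun l t p => phpp u x t p - phpp u x (2 * l - t) p)
    T (Real.log d) (min l1 (-Real.log C - M)) l1 hT (by linarith) ?_ ?_ ?_ ?_ ?_ ?_ ?_ ?_ ?_ ?_ ?_
  rotate_left
  · intro l t p h1 h2
    have c1 := ContinuousAt.comp (x := ((l, t, p) : ℝ × ℝ × ℝ))
      (f := fun q : ℝ × ℝ × ℝ => (q.2.1, q.2.2)) (ph_c hd hu t p h1) (by fun_prop)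
    have c2 := ContinuousAt.comp (x := ((l, t, p) : ℝ × ℝ × ℝ))
      (f := fun q : ℝ × ℝ × ℝ => (2 * q.1 - q.2.1, q.2.2)) (ph_c hd hu (2 * l - t) p h2) (by fun_prop)
    have c3 : Continuous (fun q : ℝ × ℝ × ℝ => h (q.2.1 - q.1)) := hhc.comp (by fun_prop)
    exact (c1.sub c2).add c3.continuousAt
  · intro l t p h1 h2
    have c1 := ContinuousAt.comp (x := ((l, t, p) : ℝ × ℝ × ℝ))
      (f := fun q : ℝ × ℝ × ℝ => (q.2.1, q.2.2)) (ph_ct hd hu t p h1) (by fun_prop)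
    have c2 := ContinuousAt.comp (x := ((l, t, p) : ℝ × ℝ × ℝ))
      (f := fun q : ℝ × ℝ × ℝ => (2 * q.1 - q.2.1, q.2.2)) (ph_ct hd hu (2 * l - t) p h2) (by fun_prop)
    have c3 : Continuous (fun q : ℝ × ℝ × ℝ => h' (q.2.1 - q.1)) := hhc'.comp (by fun_prop)
    exact (c1.add c2).add c3.continuousAt
  · intro l t p
    simp only [ph, ev_per]
  · intro l t p h1 h2
    have d1 := ph_dt hd hu t p h1
    have d2 := (ph_dt hd hu (2 * l - t) p h2).comp t (dref l t)
    have d3 := (dh (t - l)).comp t (dsh l t)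
    exact ((d1.sub d2).add d3).congr_deriv (by ring)
  · intro l t p h1 h2
    have d1 := ph_dtt hd hu t p h1
    have d2 := (ph_dtt hd hu (2 * l - t) p h2).comp t (dref l t)
    have d3 := (dh' (t - l)).comp t (dsh l t)
    exact ((d1.add d2).add d3).congr_deriv (by ring)
  · intro l t p h1 h2
    exact ((ph_dp hd hu t p h1).sub (ph_dp hd hu (2 * l - t) p h2)).add_const _
  · intro l t p h1 h2
    exact (ph_dpp hd hu t p h1).sub (ph_dpp hd hu (2 * l - t) p h2)
  · intro l p
    rw [show 2 * l - l = l by ring, sub_self, sub_self, hh0, add_zero]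
  · intro l hl t hlt htT p
    have hl1' : l ≤ l1 := hl.trans (min_le_left _ _)
    have hl2 : l ≤ -Real.log C - M := hl.trans (min_le_right _ _)
    have hlow := hhlow (t - l) (by linarith)
    have hητ : η * (t - l) ≤ t - l := by
      have := mul_le_mul_of_nonneg_right hη1 (show 0 ≤ t - l by linarith)
      linarith
    rcases le_or_gt (C * Real.exp t) 1 with hcase | hcase
    · have hmv : 1 * (t - (2 * l - t)) ≤ ph u x t p - ph u x (2 * l - t) p := by
        refine (convex_Iic t).mul_sub_le_image_sub_of_le_deriv (f := fun t => ph u x t p)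
          ?_ ?_ ?_ _ (show 2 * l - t ≤ t by linarith) _ (le_refl t) (by linarith)
        · intro z hz
          have hz' : z ≤ t := hz
          exact (ph_dt hd hu z p (by linarith)).continuousAt.continuousWithinAt
        · intro z hz
          rw [interior_Iic] at hz
          have hz' : z < t := hz
          exact (ph_dt hd hu z p (by linarith)).differentiableAt.differentiableWithinAt
        · intro z hz
          rw [interior_Iic] at hz
          have hz' : z < t := hz
          rw [(ph_dt hd hu z p (by linarith)).deriv]
          have h1 := abs_le.1 (hphtb z p (by linarith))
          have h2 : C * Real.exp z ≤ C * Real.exp t :=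
            mul_le_mul_of_nonneg_left (Real.exp_le_exp.2 hz'.le) (by linarith)
          linarith [h1.1]
      linarith
    · have h1 := hph0 t p (by linarith)
      have h2 := hphM (2 * l - t) p (by linarith)
      have h3 : -Real.log C < t := by
        have : 0 < Real.log (C * Real.exp t) := Real.log_pos hcase
        rw [Real.log_mul (by linarith) (Real.exp_pos _).ne', Real.log_exp] at this
        linarith
      linarith
  · intro l hl p
    have hlow := hhlow (T - l) (by linarith)
    have h1 := hph0 T p hT
    have h2 := hphM (2 * l - T) p (by linarith)
    have h3 : η * (l1 - l) ≤ l1 - l := by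
      have := mul_le_mul_of_nonneg_right hη1 (show 0 ≤ l1 - l by linarith)
      linarith
    have h4 : η * (T - l) = η * (T - l1) + η * (l1 - l) := by ring
    linarith
  · intro l hl t hlt htT p hG
    have ht1 : t < Real.log d := by linarith
    have ht2 : 2 * l - t < Real.log d := by linarith
    have e1 := hphpde t p ht1
    have e2 := hphpde (2 * l - t) p ht2
    have hle : ph u x (2 * l - t) p ≤ ph u x t p := by linarith [hhneg (t - l)]
    have m1 := ev_mem (x := x) hd ht1 p
    have m2 := ev_mem (x := x) hd ht2 p
    have hVd : V (x + ev (2 * l - t) p) - V (x + ev t p) ≤ A * Real.exp (s * t) := by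
      have h1 := (le_abs_self _).trans (hVh _ m2 _ m1)
      refine h1.trans (mul_le_mul_of_nonneg_left ?_ hA)
      have h2 : x + ev (2 * l - t) p - (x + ev t p)
          = ((Real.exp (2 * l - t) - Real.exp t) / Real.exp t) • ev t p := by
        unfold ev
        rw [add_sub_add_left_eq_sub, smul_add, smul_smul, smul_smul, add_sub_add_comm, ← sub_smul,
          ← sub_smul]
        congr 2 <;> field_simp
      have h3 : ‖x + ev (2 * l - t) p - (x + ev t p)‖ ≤ Real.exp t := by
        rw [h2, norm_smul, ev_norm, norm_div, Real.norm_eq_abs, Real.norm_eq_abs,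
          abs_of_pos (Real.exp_pos t), div_mul_cancel₀ _ (Real.exp_pos t).ne', abs_le]
        have := Real.exp_le_exp.2 (show 2 * l - t ≤ t by linarith)
        constructor <;> linarith [Real.exp_pos t, Real.exp_pos (2 * l - t)]
      have h4 := Real.rpow_le_rpow (norm_nonneg _) h3 hs0.le
      rwa [← Real.exp_mul, mul_comm t s] at h4
    have hVt := (hV _ m1).1
    have q1 : V (x + ev t p) * Real.exp (ph u x (2 * l - t) p)
        ≤ V (x + ev t p) * Real.exp (ph u x t p) :=
      mul_le_mul_of_nonneg_left (Real.exp_le_exp.2 hle) (by linarith)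
    have q2 : (V (x + ev (2 * l - t) p) - V (x + ev t p)) * Real.exp (ph u x (2 * l - t) p)
        ≤ A * Real.exp (s * t) * Real.exp (M + 2 * (2 * l - t)) := by
      refine (mul_le_mul_of_nonneg_right hVd (Real.exp_pos _).le).trans ?_
      exact mul_le_mul_of_nonneg_left (Real.exp_le_exp.2 (hphM _ _ ht2)) (by positivity)
    have q3 : Real.exp (s * t) * Real.exp (M + 2 * (2 * l - t))
        ≤ Real.exp (2 * ℓ + s * l1) * Real.exp (-(t - l)) := by
      rw [← Real.exp_add, ← Real.exp_add, Real.exp_le_exp]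
      have r1 : (1 - s) * l ≤ (1 - s) * t := mul_le_mul_of_nonneg_left hlt (by linarith)
      have r2 : (2 + s) * l ≤ (2 + s) * l1 := mul_le_mul_of_nonneg_left hl (by linarith)
      have r3 : 2 * l1 = -M + 2 * ℓ := by rw [hl1]; ring
      linarith
    have q4 := mul_le_mul_of_nonneg_left q3 hA
    have q5 : 0 < Real.exp (2 * ℓ + s * l1) * Real.exp (-(t - l)) := by positivity
    have q6 : h'' (t - l) = -((A + 1) * Real.exp (2 * ℓ + s * l1) * Real.exp (-(t - l))) := by
      simp only [hh'']
      rw [hη]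
    rw [q6]
    linarith
  -- monotonicity
  have hmono : ∀ t p, t ≤ l1 → 0 ≤ pht u x t p := by
    intro l p hl
    by_contra hneg
    push Not at hneg
    have hD : HasDerivAt (fun t => ph u x t p - ph u x (2 * l - t) p + h (t - l))
        (pht u x l p + pht u x l p) l := by
      have d1 := ph_dt hd hu l p (by linarith)
      have d2 := (ph_dt hd hu (2 * l - l) p (by linarith)).comp l (dref l l)
      have d3 : HasDerivAt (fun t => h (t - l)) (h' (l - l) * 1) l :=
        HasDerivAt.comp l (h₂ := h) (h := fun t => t - l) (dh (l - l)) (dsh l l)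
      refine ((d1.sub d2).add d3).congr_deriv ?_
      rw [show 2 * l - l = l by ring, sub_self]
      simp [hh']
    have hlt := hasDerivAt_iff_tendsto_slope.1 hD
    have h4 := hlt.eventually (gt_mem_nhds (show pht u x l p + pht u x l p < 0 by linarith))
    have h5 := h4.filter_mono (nhdsWithin_mono l (show Set.Ioi l ⊆ {l}ᶜ from fun y hy => ne_of_gt hy))
    have h6 : Set.Ioo l T ∈ nhdsWithin l (Set.Ioi l) := Ioo_mem_nhdsGT (by linarith)
    obtain ⟨y, hy1, hy2⟩ := (h5.and h6).exists
    rw [slope_def_field] at hy1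
    have hpos : 0 < y - l := sub_pos.2 hy2.1
    rw [div_lt_iff₀ hpos, show 2 * l - l = l by ring, sub_self, sub_self, hh0] at hy1
    have := key l hl y hy2.1.le hy2.2.le p
    linarith
  exact mean_contra (ph u x) (pht u x) (phtt u x) (php u x) (phpp u x) (fun t p => V (x + ev t p))
    T M a b C ℓ
    (fun t p ht => ph_c hd hu t p (by linarith))
    (fun t p ht => ph_ct hd hu t p (by linarith))
    (fun t p ht => ph_ctt hd hu t p (by linarith))
    (fun t p ht => ph_cpp hd hu t p (by linarith))
    (fun t p ht => ph_dt hd hu t p (by linarith))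
    (fun t p ht => ph_dtt hd hu t p (by linarith))
    (fun t p ht => ph_dpp hd hu t p (by linarith))
    (fun t => by unfold php ev eo; simp)
    (fun t p ht => hphpde t p (by linarith))
    ha (fun t p ht => hV _ (ev_mem hd (by linarith) p))
    (fun t p ht => hphM t p (by linarith))
    (fun t p ht => hphb t p ht.le)
    (fun t p ht => hphtb t p ht.le)
    (by linarith) hℓ0 hℓ hmono

lemma u_nonneg (u : E2 → ℝ) (hu : ContDiffOn ℝ 2 u (closedBall (0:E2) 1))
    (hl : ∀ y ∈ ball (0:E2) 1, lapl u y ≤ 0) (hbc : ∀ y ∈ sphere (0:E2) 1, u y = 0) :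
    ∀ y ∈ closedBall (0:E2) 1, 0 ≤ u y := by
  have hub : ContDiffOn ℝ 2 u (ball (0:E2) 1) := hu.mono ball_subset_closedBall
  have main : ∀ ε : ℝ, 0 < ε → ∀ y ∈ closedBall (0:E2) 1, -ε ≤ u y := by
    intro ε hε
    have hfc : ContinuousOn (fun y : E2 => u y - ε * ‖y‖ ^ 2) (closedBall (0:E2) 1) :=
      hu.continuousOn.sub (by fun_prop)
    obtain ⟨y0, hy0, hmin⟩ := (isCompact_closedBall (0:E2) 1).exists_isMinOn
      ⟨0, mem_closedBall_self zero_le_one⟩ hfc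
    have hmin' : ∀ y ∈ closedBall (0:E2) 1, u y0 - ε * ‖y0‖ ^ 2 ≤ u y - ε * ‖y‖ ^ 2 :=
      fun y hy => hmin hy
    have hbd : ‖y0‖ = 1 := by
      by_contra hne
      have hle : ‖y0‖ ≤ 1 := by simpa using hy0
      have hy0b : y0 ∈ ball (0:E2) 1 := by simpa using lt_of_le_of_ne hle hne
      have dir : ∀ j : Fin 2, 2 * ε ≤ pd j (pd j u) y0 := by
        intro j
        rw [pd_pd hub hy0b]
        set e : E2 := EuclideanSpace.single j 1 with he
        have hen : ‖e‖ = 1 := by simp [he]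
        set c : ℝ := inner ℝ y0 e with hc
        have dl : ∀ τ : ℝ, HasDerivAt (fun τ : ℝ => y0 + τ • e) e τ := by
          intro τ
          have := ((hasDerivAt_id τ).smul_const e).const_add y0
          rwa [one_smul] at this
        have dq : ∀ τ : ℝ, HasDerivAt (fun τ : ℝ => ε * (‖y0‖ ^ 2 + 2 * (τ * c) + τ ^ 2))
            (ε * (2 * c + 2 * τ)) τ := by
          intro τ
          have := (((((hasDerivAt_id τ).mul_const c).const_mul 2).const_add (‖y0‖ ^ 2)).add
            ((hasDerivAt_id τ).pow 2)).const_mul ε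
          refine this.congr_deriv ?_
          simp
        have dq2 : HasDerivAt (fun τ : ℝ => ε * (2 * c + 2 * τ)) (ε * 2) 0 := by
          have := (((hasDerivAt_id (0:ℝ)).const_mul 2).const_add (2 * c)).const_mul ε
          refine this.congr_deriv ?_
          simp
        have hev : ∀ᶠ τ : ℝ in nhds 0, y0 + τ • e ∈ ball (0:E2) 1 := by
          have hcont : ContinuousAt (fun τ : ℝ => y0 + τ • e) 0 := (dl 0).continuousAt
          apply hcont.eventually_mem
          apply isOpen_ball.mem_nhds
          simpa using hy0b
        have h0 : y0 + (0:ℝ) • e = y0 := by simp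
        have h1 : HasDerivAt (fun τ : ℝ => fderiv ℝ u (y0 + τ • e) e - ε * (2 * c + 2 * τ))
            (fderiv ℝ (fderiv ℝ u) y0 e e - ε * 2) 0 := by
          have hF := (c2_facts hub hy0b).2.1
          rw [← h0] at hF
          have h2 := hF.comp_hasDerivAt (0:ℝ) (dl 0)
          have h3 := (h2.clm_apply (hasDerivAt_const (0:ℝ) e)).sub dq2
          refine h3.congr_deriv ?_
          simp
        have h4 := deriv2_nonneg_of_min
          (f := fun τ : ℝ => u (y0 + τ • e) - ε * (‖y0‖ ^ 2 + 2 * (τ * c) + τ ^ 2)) ?_ h1 ?_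
        · linarith
        · filter_upwards [hev] with τ hτ
          exact ((c2_facts hub hτ).1.comp_hasDerivAt τ (dl τ)).sub (dq τ)
        · filter_upwards [hev] with τ hτ
          have h5 := hmin' _ (ball_subset_closedBall hτ)
          rw [norm_add_sq_real, inner_smul_right, norm_smul, hen, mul_one, Real.norm_eq_abs,
            sq_abs] at h5
          simpa using h5
      have h6 := hl y0 hy0b
      unfold lapl at h6
      linarith [dir 0, dir 1]
    intro y hy
    have h1 := hmin' y hy
    rw [hbc y0 (by simpa using hbd), hbd] at h1
    have : 0 ≤ ε * ‖y‖ ^ 2 := by positivity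
    linarith
  intro y hy
  by_contra hneg
  push Not at hneg
  have := main (-(u y) / 2) (by linarith) y hy
  linarith

lemma infDist_sphere (x : E2) (hx : x ∈ ball (0:E2) 1) :
    Metric.infDist x (sphere (0:E2) 1) = 1 - ‖x‖ := by
  have hne : (sphere (0:E2) 1).Nonempty := ⟨EuclideanSpace.single 0 1, by simp⟩
  have hx1 : ‖x‖ < 1 := by simpa using hx
  apply le_antisymm
  · by_cases h0 : x = 0
    · have := Metric.infDist_le_dist_of_mem (x := x) (s := sphere (0:E2) 1)
        (y := EuclideanSpace.single 0 1) (by simp)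
      refine this.trans ?_
      rw [h0, dist_zero_left]; simp
    · have hxp : 0 < ‖x‖ := norm_pos_iff.2 h0
      have := Metric.infDist_le_dist_of_mem (x := x) (s := sphere (0:E2) 1)
        (y := ‖x‖⁻¹ • x) (by
          rw [mem_sphere_zero_iff_norm, norm_smul, norm_inv, norm_norm, inv_mul_cancel₀ hxp.ne'])
      refine this.trans ?_
      rw [dist_comm, dist_eq_norm]
      have h2 : ‖x‖⁻¹ • x - x = (‖x‖⁻¹ - 1) • x := by rw [sub_smul, one_smul]
      have h3 : 1 ≤ ‖x‖⁻¹ := (one_le_inv₀ hxp).2 hx1.le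
      rw [h2, norm_smul, Real.norm_of_nonneg (by linarith), sub_mul, inv_mul_cancel₀ hxp.ne', one_mul]
  · rw [Metric.le_infDist hne]
    intro y hy
    have hy' : ‖y‖ = 1 := by simpa using hy
    rw [dist_comm, dist_eq_norm]
    have := norm_sub_norm_le y x
    linarith

theorem stmt15
    (b A s C₀ : ℝ) (hs1 : 1/2 < s) (hs2 : s ≤ 1)
    (V u : ℕ → E2 → ℝ) (x_ : ℕ → E2) (δ r : ℕ → ℝ) (v : ℕ → E2 → ℝ)
    (hu : ∀ i, ContDiffOn ℝ 2 (u i) (closedBall (0:E2) 1))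
    (hVb : ∀ i, ∀ x ∈ ball (0:E2) 1, 0 ≤ V i x ∧ V i x ≤ b)
    (hVhol : ∀ i, ∀ x ∈ ball (0:E2) 1, ∀ y ∈ ball (0:E2) 1, |V i x - V i y| ≤ A * ‖x - y‖ ^ s)
    (hpde : ∀ i, ∀ x ∈ ball (0:E2) 1, -(lapl (u i) x) = V i x * Real.exp (u i x))
    (hbc : ∀ i, ∀ x ∈ sphere (0:E2) 1, u i x = 0)
    (hint : ∀ i, (∫ y in ball (0:E2) 1, Real.exp (u i y)) ≤ C₀)
    (hxmem : ∀ i, x_ i ∈ ball (0:E2) 1)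
    (hmax : ∀ i, ∀ y ∈ closedBall (0:E2) 1, u i y ≤ u i (x_ i))
    (hblow : Tendsto (fun i => u i (x_ i)) atTop atTop)
    (hδ : ∀ i, δ i = Metric.infDist (x_ i) (sphere (0:E2) 1))
    (hδ0 : Tendsto δ atTop (nhds 0))
    (hr : ∀ i, r i = Real.exp (-(u i (x_ i)) / 2))
    (hrδ : Tendsto (fun i => r i / δ i) atTop (nhds 0))
    (hmass : Tendsto (fun i => ∫ y in ball (x_ i) (δ i / 2), V i y * Real.exp (u i y)) atTop
      (nhds (8 * Real.pi)))
    (hbound : ∀ ε : ℝ, 0 < ε → ε < 1 → ∃ Cε : ℝ, ∀ i, ∀ y : E2, ‖y‖ = ε →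
      u i (x_ i + δ i • y) ≤ Cε)
    (hv : ∀ i θ, v i θ = u i (x_ i + r i • θ) - u i (x_ i)) :
    ∃ C' : ℝ, ∀ i, u i (x_ i) + 4 * Real.log (δ i) ≤ C' := by
  set K : ℝ := |C₀| + 1 with hK
  have hKpos : 0 < K := by positivity
  set a : ℝ := Real.pi / K with ha
  have hapos : 0 < a := div_pos Real.pi_pos hKpos
  set A' : ℝ := |A| with hA'
  have hA0 : 0 ≤ A' := abs_nonneg A
  set ℓ : ℝ := 3 / (a * Real.exp (-b/4)) with hℓ
  have hq : 0 < a * Real.exp (-b/4) := by positivity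
  have hℓ0 : 0 ≤ ℓ := by positivity
  have hℓ2 : 2 < ℓ * (a * Real.exp (-b/4)) := by
    rw [hℓ, div_mul_cancel₀ _ hq.ne']; norm_num
  have hs0 : 0 < s := by linarith
  have hδeq : ∀ i, δ i = 1 - ‖x_ i‖ := fun i => (hδ i).trans (infDist_sphere _ (hxmem i))
  have hδpos : ∀ i, 0 < δ i := by
    intro i
    have : ‖x_ i‖ < 1 := by simpa using hxmem i
    rw [hδeq]; linarith
  have hδ1 : ∀ i, δ i ≤ 1 := by
    intro i; rw [hδeq]; linarith [norm_nonneg (x_ i)]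
  have hsub : ∀ i, ball (x_ i) (δ i) ⊆ ball (0:E2) 1 := by
    intro i
    apply ball_subset_ball'
    rw [hδeq, dist_zero_right]; linarith
  have hVh' : ∀ i, ∀ x ∈ ball (0:E2) 1, ∀ y ∈ ball (0:E2) 1,
      |V i x - V i y| ≤ A' * ‖x - y‖ ^ s := by
    intro i x hx y hy
    exact (hVhol i x hx y hy).trans
      (mul_le_mul_of_nonneg_right (le_abs_self A) (by positivity))
  have ev1 : ∀ᶠ i in atTop, A' * δ i ^ s ≤ a := by
    have h1 : Tendsto (fun i => A' * δ i ^ s) atTop (nhds (A' * 0 ^ s)) :=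
      (hδ0.rpow_const (Or.inr hs0.le)).const_mul A'
    rw [Real.zero_rpow hs0.ne', mul_zero] at h1
    filter_upwards [h1.eventually (gt_mem_nhds hapos)] with i hi
    exact hi.le
  have ev2 : ∀ᶠ i in atTop, 4 * Real.pi <
      ∫ y in ball (x_ i) (δ i / 2), V i y * Real.exp (u i y) :=
    hmass.eventually (lt_mem_nhds (by linarith [Real.pi_pos]))
  have ev3 : ∀ᶠ i in atTop, 0 < u i (x_ i) := hblow.eventually_gt_atTop 0
  set Q : ℝ := (A' + 1) * Real.exp (2 * ℓ + s * ℓ) with hQ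
  have hηeq : ∀ M : ℝ, (A' + 1) * Real.exp (2 * ℓ + s * (-M/2 + ℓ))
      = Q * Real.exp (-(s / 2 * M)) := by
    intro M
    rw [hQ, mul_assoc, ← Real.exp_add]
    ring_nf
  have hinf : Tendsto (fun i => s / 2 * u i (x_ i)) atTop atTop :=
    hblow.const_mul_atTop (by linarith)
  have ev4 : ∀ᶠ i in atTop,
      (A' + 1) * Real.exp (2 * ℓ + s * (-(u i (x_ i))/2 + ℓ)) ≤ 1 := by
    have h1 : Tendsto (fun i => Q * Real.exp (-(s / 2 * u i (x_ i)))) atTop (nhds (Q * 0)) :=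
      (Real.tendsto_exp_neg_atTop_nhds_zero.comp hinf).const_mul Q
    rw [mul_zero] at h1
    filter_upwards [h1.eventually (gt_mem_nhds one_pos)] with i hi
    rw [hηeq]; exact hi.le
  have ev5 : ∀ᶠ i in atTop,
      (A' + 1) * Real.exp (2 * ℓ + s * (-(u i (x_ i))/2 + ℓ)) * u i (x_ i) ≤ 2 := by
    have h1 : Tendsto (fun i => (Q * (2 / s)) *
        ((s / 2 * u i (x_ i)) ^ 1 * Real.exp (-(s / 2 * u i (x_ i))))) atTop
        (nhds ((Q * (2 / s)) * 0)) :=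
      ((Real.tendsto_pow_mul_exp_neg_atTop_nhds_zero 1).comp hinf).const_mul _
    rw [mul_zero] at h1
    filter_upwards [h1.eventually (gt_mem_nhds (show (0:ℝ) < 2 by norm_num))] with i hi
    rw [hηeq]
    refine le_trans (le_of_eq ?_) hi.le
    field_simp
  have hfin : ∀ᶠ i in atTop, u i (x_ i) + 4 * Real.log (δ i) ≤ 4 * ℓ + 4 * Real.log 2 + 1 := by
    filter_upwards [ev1, ev2, ev3, ev4, ev5] with i h1 h2 h3 h4 h5
    have hnn := u_nonneg (u i) (hu i) (by
      intro y hy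
      have e1 := hpde i y hy
      have e2 := mul_nonneg (hVb i y hy).1 (Real.exp_pos (u i y)).le
      linarith) (hbc i)
    have hosc : ∀ y ∈ ball (x_ i) (δ i), |V i y - V i (x_ i)| ≤ a := by
      intro y hy
      refine ((hVh' i y (hsub i hy) (x_ i) (hxmem i)).trans ?_).trans h1
      refine mul_le_mul_of_nonneg_left (Real.rpow_le_rpow (norm_nonneg _) ?_ hs0.le) hA0
      rw [mem_ball, dist_eq_norm] at hy
      exact hy.le
    have hIe : IntegrableOn (fun y => Real.exp (u i y)) (ball (0:E2) 1) := by
      have hcon : ContinuousOn (fun y => Real.exp (u i y)) (closedBall (0:E2) 1) :=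
        Real.continuous_exp.comp_continuousOn (hu i).continuousOn
      exact (hcon.integrableOn_compact (isCompact_closedBall _ _)).mono_set ball_subset_closedBall
    have hs2' : ball (x_ i) (δ i / 2) ⊆ ball (x_ i) (δ i) :=
      ball_subset_ball (by linarith [hδpos i])
    have hIV : IntegrableOn (fun y => V i y * Real.exp (u i y)) (ball (x_ i) (δ i / 2)) := by
      by_contra hn
      rw [integral_undef hn] at h2
      linarith [Real.pi_pos]
    have hVx : 3 * a ≤ V i (x_ i) := by
      have g1 : (∫ y in ball (x_ i) (δ i / 2), V i y * Real.exp (u i y)) ≤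
          ∫ y in ball (x_ i) (δ i / 2), (V i (x_ i) + a) * Real.exp (u i y) := by
        refine setIntegral_mono_on hIV
          ((hIe.mono_set (hs2'.trans (hsub i))).const_mul _) measurableSet_ball ?_
        intro y hy
        apply mul_le_mul_of_nonneg_right _ (Real.exp_pos _).le
        linarith [(abs_le.1 (hosc y (hs2' hy))).2]
      have g2 : (∫ y in ball (x_ i) (δ i / 2), Real.exp (u i y)) ≤ K := by
        have g3 : (∫ y in ball (x_ i) (δ i / 2), Real.exp (u i y)) ≤
            ∫ y in ball (0:E2) 1, Real.exp (u i y) := by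
          refine setIntegral_mono_set hIe ?_ (hs2'.trans (hsub i)).eventuallyLE
          exact Eventually.of_forall fun y => (Real.exp_pos _).le
        have := hint i
        have := le_abs_self C₀
        rw [hK]; linarith
      rw [integral_const_mul] at g1
      have hVxn := (hVb i _ (hxmem i)).1
      have g4 := mul_le_mul_of_nonneg_left g2 (show 0 ≤ V i (x_ i) + a by linarith)
      have g5 : a * K = Real.pi := by rw [ha, div_mul_cancel₀ _ hKpos.ne']
      have g6 : 4 * a * K < (V i (x_ i) + a) * K := by linarith
      have := lt_of_mul_lt_mul_right g6 hKpos.le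
      linarith
    refine core (u i) (V i) (x_ i) (δ i) (u i (x_ i)) a b A' s ℓ _ (hδpos i) (hδ1 i)
      ((hu i).mono ((hsub i).trans ball_subset_closedBall)) rfl h3
      (fun y hy => hnn y (ball_subset_closedBall (hsub i hy)))
      (fun y hy => hmax i y (ball_subset_closedBall (hsub i hy)))
      (fun y hy => hpde i y (hsub i hy)) hapos ?_ hA0 hs0 hs2
      (fun y hy z hz => hVh' i y (hsub i hy) z (hsub i hz)) hℓ0 hℓ2 rfl h4 h5
    intro y hy
    refine ⟨?_, (hVb i y (hsub i hy)).2⟩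
    linarith [(abs_le.1 (hosc y hy)).1]
  have hbd : IsBoundedUnder (· ≤ ·) atTop (fun i => u i (x_ i) + 4 * Real.log (δ i)) :=
    ⟨_, hfin⟩
  obtain ⟨C', hC'⟩ := hbd.bddAbove_range
  exact ⟨C', fun i => hC' ⟨i, rfl⟩⟩
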